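/- Let N ≥ 2, μ₁ ∈ ℝ, μ₂ ≥ -(N-2-μ₁)²/4, r > 0, θ > -2, p > 0 and q₀ > 0. Let u ∈ C²(B_r \ {0}) be a positive function satisfying ℒ_{μ₁,μ₂}u(x) ≥ q₀|x|^{θ} u(x)^p in B_r \ {0} and u ≥ 0 on ∂B_r, and suppose u(x) ≥ d|x|^{τ} in B_r \ {0} for some d > 0 and τ ∈ ℝ such that pτ + θ + 2 ∈ (τ₋, τ₊). Then there exists d' > 0 such that u(x) ≥ d'|x|^{pτ + θ + 2} for all x ∈ B_{r/2} \ {0}. -/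

import Mathlib

open MeasureTheory Filter Metric Set Topology

noncomputable section

/-- Euclidean space `ℝ^N`. -/
abbrev E (N : ℕ) := EuclideanSpace ℝ (Fin N)

/-- The Laplacian, as the sum of second derivatives in the coordinate directions. -/
def lap (N : ℕ) (u : E N → ℝ) (x : E N) : ℝ :=
  ∑ i, fderiv ℝ (fun y => fderiv ℝ u y (EuclideanSpace.single i 1)) x (EuclideanSpace.single i 1)

/-- The CKN operator `ℒ_{μ₁,μ₂} u = -Δu + μ₁|x|⁻² x·∇u + μ₂|x|⁻² u`. -/
def ckn (N : ℕ) (μ₁ μ₂ : ℝ) (u : E N → ℝ) (x : E N) : ℝ :=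
  -lap N u x + μ₁ / ‖x‖ ^ 2 * fderiv ℝ u x x + μ₂ / ‖x‖ ^ 2 * u x

/-- `τ₊(μ₁,μ₂)`. -/
def tauPlus (N : ℕ) (μ₁ μ₂ : ℝ) : ℝ :=
  ((2 - (N : ℝ) + μ₁) + Real.sqrt ((2 - (N : ℝ) + μ₁) ^ 2 + 4 * μ₂)) / 2

/-- `τ₋(μ₁,μ₂)`. -/
def tauMinus (N : ℕ) (μ₁ μ₂ : ℝ) : ℝ :=
  ((2 - (N : ℝ) + μ₁) - Real.sqrt ((2 - (N : ℝ) + μ₁) ^ 2 + 4 * μ₂)) / 2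

/-- Surface measure of the unit sphere `𝕊^{N-1}` in `ℝ^N`. -/
def sphereArea (N : ℕ) : ℝ := N * (volume (ball (0 : E N) 1)).toReal

/-- Local β-Hölder continuity of `f` on a set `s`. -/
def LocHolderOn (N : ℕ) (β : ℝ) (f : E N → ℝ) (s : Set (E N)) : Prop :=
  ∀ x ∈ s, ∃ t ∈ nhdsWithin x s, ∃ C : NNReal, HolderOnWith C β.toNNReal f t

/-!
Let `φ = |x|^σ` with `σ = pτ + θ + 2` and `ψ = |x|^{τ₋}`. Since
`ℒ|x|^s = (s - τ₋)(τ₊ - s)|x|^{s-2}`, the power `φ` satisfies `ℒφ > 0` while `ℒψ = 0`, and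
`φ = o(ψ)` at the origin. The lower bound on `u` turns the nonlinear inequality into
`ℒu ≥ q₀ d^p |x|^{σ-2}`, so `ℒu ≥ d' ℒφ` for small `d'`. For every `ε > 0` the function `u + εψ`
therefore dominates `d'φ` on the boundary of an annulus with small inner radius, and inside it by
the maximum principle; letting `ε → 0` removes the singular term. The zeroth-order coefficient may
have either sign, so the maximum principle is obtained by minimising the quotient `(u + εψ) / φ`,
which works because `φ` is a positive strict supersolution.
-/

open Laplacian Asymptotics
open scoped RealInnerProductSpace

section SecondDerivativeTest

theorem deriv_deriv_nonneg_of_isLocalMin {f : ℝ → ℝ} {a : ℝ} (hf : ContinuousAt f a)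
    (hmin : IsLocalMin f a) : 0 ≤ deriv (deriv f) a := by
  by_contra! hneg
  have hmax : IsLocalMax f a := isLocalMax_of_deriv_deriv_neg hneg hmin.deriv_eq_zero hf
  have hconst : f =ᶠ[𝓝 a] fun _ => f a := by
    filter_upwards [hmin, hmax] with t h₁ h₂ using le_antisymm h₂ h₁
  simp [hconst.deriv.deriv_eq] at hneg

variable {V F : Type*} [NormedAddCommGroup V] [NormedSpace ℝ V]
  [NormedAddCommGroup F] [NormedSpace ℝ F]

theorem deriv_deriv_comp_add_smul_zero {f : V → F} {x : V} (hf : ContDiffAt ℝ 2 f x) (v : V) :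
    deriv (deriv fun t : ℝ => f (x + t • v)) 0 = fderiv ℝ (fderiv ℝ f) x v v := by
  have hline (t : ℝ) : HasDerivAt (fun t : ℝ => x + t • v) v t := by
    simpa using ((hasDerivAt_id t).smul_const v).const_add x
  have hx : x + (0 : ℝ) • v = x := by simp
  rw [← hx] at hf
  have hfirst : deriv (fun t : ℝ => f (x + t • v)) =ᶠ[𝓝 0] fun t => fderiv ℝ f (x + t • v) v := by
    filter_upwards [(hline 0).continuousAt.eventually (hf.eventually (by simp))] with t ht
    exact ((ht.differentiableAt two_ne_zero).hasFDerivAt.comp_hasDerivAt t (hline t)).deriv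
  have hsecond := ((hf.fderiv_right (m := 1) (by norm_num)).differentiableAt
    one_ne_zero).hasFDerivAt.comp_hasDerivAt 0 (hline 0)
  rw [hfirst.deriv_eq]
  simpa using (hsecond.clm_apply (hasDerivAt_const 0 v)).deriv

theorem fderiv_fderiv_apply_self_nonneg_of_isLocalMin {f : V → ℝ} {x : V}
    (hf : ContDiffAt ℝ 2 f x) (hmin : IsLocalMin f x) (v : V) :
    0 ≤ fderiv ℝ (fderiv ℝ f) x v v := by
  have hline : ContinuousAt (fun t : ℝ => x + t • v) 0 := by fun_prop
  have hx : x + (0 : ℝ) • v = x := by simp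
  rw [← deriv_deriv_comp_add_smul_zero hf]
  rw [← hx] at hf hmin
  exact deriv_deriv_nonneg_of_isLocalMin
    (ContinuousAt.comp (f := fun t : ℝ => x + t • v) hf.continuousAt hline)
    (IsMinFilter.comp_tendsto hmin hline)

end SecondDerivativeTest

section Laplacian

variable {V : Type*} [NormedAddCommGroup V] [InnerProductSpace ℝ V]

theorem hasFDerivAt_norm_rpow_of_ne_zero (s : ℝ) {x : V} (hx : x ≠ 0) :
    HasFDerivAt (fun y : V => ‖y‖ ^ s) ((s * ‖x‖ ^ (s - 2)) • innerSL ℝ x) x := by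
  have hn : ‖x‖ ≠ 0 := norm_ne_zero_iff.mpr hx
  have hsq : (fun y : V => ‖y‖ ^ s) = fun y => (‖y‖ ^ 2) ^ (s / 2) := by
    ext y
    rw [← Real.rpow_natCast_mul (norm_nonneg y)]
    congr 1
    push_cast
    ring
  have hcoeff : s / 2 * (‖x‖ ^ 2) ^ (s / 2 - 1) * 2 = s * ‖x‖ ^ (s - 2) := by
    rw [← Real.rpow_natCast_mul (norm_nonneg x)]
    push_cast
    ring_nf
  rw [hsq, ← hcoeff, mul_smul, ofNat_smul_eq_nsmul]
  exact (hasStrictFDerivAt_norm_sq x).hasFDerivAt.rpow_const (Or.inl (pow_ne_zero 2 hn))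

theorem contDiffAt_norm_rpow (s : ℝ) {n : ℕ∞} {x : V} (hx : x ≠ 0) :
    ContDiffAt ℝ n (fun y : V => ‖y‖ ^ s) x :=
  (contDiffAt_norm ℝ hx).rpow_const_of_ne (norm_ne_zero_iff.mpr hx)

theorem fderiv_fderiv_norm_rpow_apply_self (s : ℝ) {x : V} (hx : x ≠ 0) (v : V) :
    fderiv ℝ (fderiv ℝ fun y : V => ‖y‖ ^ s) x v v =
      s * (s - 2) * ‖x‖ ^ (s - 4) * ⟪x, v⟫ ^ 2 + s * ‖x‖ ^ (s - 2) * ‖v‖ ^ 2 := by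
  have hfirst : fderiv ℝ (fun y : V => ‖y‖ ^ s) =ᶠ[𝓝 x]
      fun y => (s * ‖y‖ ^ (s - 2)) • innerSL ℝ y := by
    filter_upwards [isOpen_ne.mem_nhds hx] with y hy
    exact (hasFDerivAt_norm_rpow_of_ne_zero s hy).fderiv
  have hsecond := ((hasFDerivAt_norm_rpow_of_ne_zero (s - 2) hx).const_mul s).fun_smul
    (innerSL ℝ (E := V)).hasFDerivAt
  rw [hfirst.fderiv_eq, hsecond.fderiv]
  calc s * ‖x‖ ^ (s - 2) * ⟪v, v⟫ + s * ((s - 2) * ‖x‖ ^ (s - 2 - 2) * ⟪x, v⟫) * ⟪x, v⟫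
      = s * (s - 2) * ‖x‖ ^ (s - 4) * ⟪x, v⟫ ^ 2 + s * ‖x‖ ^ (s - 2) * ‖v‖ ^ 2 := by
        rw [real_inner_self_eq_norm_sq]
        ring_nf

variable [FiniteDimensional ℝ V]

theorem laplacian_eq_sum_fderiv_fderiv {F ι : Type*} [NormedAddCommGroup F] [NormedSpace ℝ F]
    [Fintype ι] (b : OrthonormalBasis ι ℝ V) (f : V → F) (x : V) :
    Δ f x = ∑ i, fderiv ℝ (fderiv ℝ f) x (b i) (b i) := by
  simp [InnerProductSpace.laplacian_eq_iteratedFDeriv_orthonormalBasis f b,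
    iteratedFDeriv_two_apply]

theorem laplacian_nonneg_of_isLocalMin {f : V → ℝ} {x : V} (hf : ContDiffAt ℝ 2 f x)
    (hmin : IsLocalMin f x) : 0 ≤ Δ f x := by
  rw [laplacian_eq_sum_fderiv_fderiv (stdOrthonormalBasis ℝ V)]
  exact Finset.sum_nonneg fun i _ => fderiv_fderiv_apply_self_nonneg_of_isLocalMin hf hmin _

theorem laplacian_norm_rpow (s : ℝ) {x : V} (hx : x ≠ 0) :
    Δ (fun y : V => ‖y‖ ^ s) x = s * (s + Module.finrank ℝ V - 2) * ‖x‖ ^ (s - 2) := by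
  set b := stdOrthonormalBasis ℝ V
  have hparseval : ∑ i, ⟪x, b i⟫ ^ 2 = ‖x‖ ^ 2 := by
    simpa only [Real.norm_eq_abs, sq_abs] using b.sum_sq_norm_inner_left x
  have hpow : ‖x‖ ^ (s - 4) * ‖x‖ ^ 2 = ‖x‖ ^ (s - 2) := by
    rw [← Real.rpow_add_natCast (norm_ne_zero_iff.mpr hx)]
    norm_num
    ring_nf
  calc Δ (fun y : V => ‖y‖ ^ s) x
      = ∑ i, (s * (s - 2) * ‖x‖ ^ (s - 4) * ⟪x, b i⟫ ^ 2 + s * ‖x‖ ^ (s - 2)) := by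
        simp [laplacian_eq_sum_fderiv_fderiv b, fderiv_fderiv_norm_rpow_apply_self s hx]
    _ = s * (s - 2) * (‖x‖ ^ (s - 4) * ‖x‖ ^ 2) + Module.finrank ℝ V * (s * ‖x‖ ^ (s - 2)) := by
        simp [Finset.sum_add_distrib, ← Finset.mul_sum, hparseval, mul_assoc]
    _ = s * (s + Module.finrank ℝ V - 2) * ‖x‖ ^ (s - 2) := by rw [hpow]; ring

end Laplacian

section Operator

variable {N : ℕ} {μ₁ μ₂ : ℝ}

theorem lap_eq_laplacian {f : E N → ℝ} {x : E N} (hf : ContDiffAt ℝ 2 f x) :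
    lap N f x = Δ f x := by
  have hfderiv : DifferentiableAt ℝ (fderiv ℝ f) x :=
    (hf.fderiv_right (m := 1) (by norm_num)).differentiableAt one_ne_zero
  simp [lap, laplacian_eq_sum_fderiv_fderiv (EuclideanSpace.basisFun (Fin N) ℝ),
    fderiv_clm_apply hfderiv (differentiableAt_const _)]

theorem ckn_add_smul {f g : E N → ℝ} {x : E N} (hf : ContDiffAt ℝ 2 f x)
    (hg : ContDiffAt ℝ 2 g x) (c : ℝ) :
    ckn N μ₁ μ₂ (f + c • g) x = ckn N μ₁ μ₂ f x + c * ckn N μ₁ μ₂ g x := by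
  have hcg : ContDiffAt ℝ 2 (c • g) x := hg.const_smul c
  have hlap : lap N (f + c • g) x = lap N f x + c * lap N g x := by
    have hfcg : ContDiffAt ℝ 2 (f + c • g) x := hf.add hcg
    rw [lap_eq_laplacian hfcg, hf.laplacian_add hcg,
      InnerProductSpace.laplacian_smul c hg, lap_eq_laplacian hf, lap_eq_laplacian hg, smul_eq_mul]
  have hgrad : fderiv ℝ (f + c • g) x = fderiv ℝ f x + c • fderiv ℝ g x := by
    rw [fderiv_add (hf.differentiableAt two_ne_zero) (hcg.differentiableAt two_ne_zero),
      fderiv_const_smul (hg.differentiableAt two_ne_zero)]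
  simp only [ckn, hlap, hgrad, Pi.add_apply, Pi.smul_apply, _root_.add_apply,
    _root_.smul_apply, smul_eq_mul]
  ring

theorem ckn_nonpos_of_isLocalMin {f : E N → ℝ} {x : E N} (hf : ContDiffAt ℝ 2 f x)
    (hmin : IsLocalMin f x) (hx : f x = 0) : ckn N μ₁ μ₂ f x ≤ 0 := by
  simpa [ckn, hmin.fderiv_eq_zero, hx, lap_eq_laplacian hf] using
    laplacian_nonneg_of_isLocalMin hf hmin

theorem sub_tauMinus_mul_tauPlus_sub (hμ₂ : -((N : ℝ) - 2 - μ₁) ^ 2 / 4 ≤ μ₂) (s : ℝ) :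
    (s - tauMinus N μ₁ μ₂) * (tauPlus N μ₁ μ₂ - s) = μ₂ + μ₁ * s - s * (s + N - 2) := by
  have hdisc : 0 ≤ (2 - (N : ℝ) + μ₁) ^ 2 + 4 * μ₂ := by linarith
  unfold tauMinus tauPlus
  linear_combination Real.sq_sqrt hdisc / 4

theorem ckn_norm_rpow (hμ₂ : -((N : ℝ) - 2 - μ₁) ^ 2 / 4 ≤ μ₂) (s : ℝ) {x : E N} (hx : x ≠ 0) :
    ckn N μ₁ μ₂ (fun y => ‖y‖ ^ s) x =
      (s - tauMinus N μ₁ μ₂) * (tauPlus N μ₁ μ₂ - s) * ‖x‖ ^ (s - 2) := by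
  have hn : ‖x‖ ≠ 0 := norm_ne_zero_iff.mpr hx
  have hpow : ‖x‖ ^ s = ‖x‖ ^ (s - 2) * ‖x‖ ^ 2 := by
    rw [← Real.rpow_add_natCast hn]
    norm_num
  rw [sub_tauMinus_mul_tauPlus_sub hμ₂, ckn, lap_eq_laplacian (contDiffAt_norm_rpow s hx),
    laplacian_norm_rpow s hx, (hasFDerivAt_norm_rpow_of_ne_zero s hx).fderiv, hpow]
  simp only [finrank_euclideanSpace_fin, _root_.smul_apply, innerSL_apply_apply,
    real_inner_self_eq_norm_sq, smul_eq_mul]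
  field_simp
  ring

end Operator

section Comparison

variable {N : ℕ} {μ₁ μ₂ d : ℝ}

theorem mul_le_of_mul_ckn_le_ckn {K : Set (E N)} (hK : IsCompact K) {w φ : E N → ℝ}
    (hw : ContDiffOn ℝ 2 w K) (hφ : ContDiffOn ℝ 2 φ K) (hφ_pos : ∀ x ∈ K, 0 < φ x)
    (hφ_ckn : ∀ x ∈ interior K, 0 < ckn N μ₁ μ₂ φ x)
    (hw_ckn : ∀ x ∈ interior K, d * ckn N μ₁ μ₂ φ x ≤ ckn N μ₁ μ₂ w x)
    (hfrontier : ∀ x ∈ frontier K, d * φ x ≤ w x) :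
    ∀ x ∈ K, d * φ x ≤ w x := by
  intro x hx
  obtain ⟨z, hzK, hmin⟩ := hK.exists_isMinOn ⟨x, hx⟩
    (hw.continuousOn.div hφ.continuousOn fun y hy => (hφ_pos y hy).ne')
  set k := w z / φ z with hk
  have hk_le (y : E N) (hy : y ∈ K) : k * φ y ≤ w y := (le_div_iff₀ (hφ_pos y hy)).mp (hmin hy)
  suffices hdk : d ≤ k from
    (mul_le_mul_of_nonneg_right hdk (hφ_pos x hx).le).trans (hk_le x hx)
  by_cases hz : z ∈ interior K
  · have hwz : ContDiffAt ℝ 2 w z := hw.contDiffAt (mem_interior_iff_mem_nhds.mp hz)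
    have hφz : ContDiffAt ℝ 2 φ z := hφ.contDiffAt (mem_interior_iff_mem_nhds.mp hz)
    have hzero : (w + (-k) • φ) z = 0 := by
      simp [hk, div_mul_cancel₀ _ (hφ_pos z hzK).ne']
    have hlocmin : IsLocalMin (w + (-k) • φ) z := by
      filter_upwards [mem_interior_iff_mem_nhds.mp hz] with y hy
      rw [hzero]
      simpa using hk_le y hy
    have htouch : ckn N μ₁ μ₂ (w + (-k) • φ) z ≤ 0 :=
      ckn_nonpos_of_isLocalMin (hwz.add (hφz.const_smul (-k))) hlocmin hzero
    rw [ckn_add_smul hwz hφz] at htouch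
    exact le_of_mul_le_mul_right (by linarith [hw_ckn z hz]) (hφ_ckn z hz)
  · exact (le_div_iff₀ (hφ_pos z hzK)).mpr (hfrontier z ⟨subset_closure hzK, hz⟩)

theorem frontier_closedBall_diff_ball_subset {α : Type*} [PseudoMetricSpace α] (x : α)
    (δ ρ : ℝ) : frontier (closedBall x ρ \ ball x δ) ⊆ sphere x ρ ∪ sphere x δ := by
  rw [sdiff_eq]
  refine (frontier_inter_subset _ _).trans (union_subset_union ?_ ?_)
  · exact inter_subset_left.trans frontier_closedBall_subset_sphere
  · rw [frontier_compl]
    exact inter_subset_right.trans frontier_ball_subset_sphere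

variable {ρ : ℝ} {u φ ψ : E N → ℝ}

theorem mul_le_add_mul_of_mul_ckn_le_ckn_of_isLittleO
    (hu : ContDiffOn ℝ 2 u (closedBall 0 ρ \ {0})) (hφ : ContDiffOn ℝ 2 φ (closedBall 0 ρ \ {0}))
    (hψ : ContDiffOn ℝ 2 ψ (closedBall 0 ρ \ {0}))
    (hu_nonneg : ∀ x ∈ closedBall 0 ρ \ {0}, 0 ≤ u x)
    (hφ_pos : ∀ x ∈ closedBall 0 ρ \ {0}, 0 < φ x)
    (hψ_nonneg : ∀ x ∈ closedBall 0 ρ \ {0}, 0 ≤ ψ x)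
    (hφ_ckn : ∀ x ∈ ball 0 ρ \ {0}, 0 < ckn N μ₁ μ₂ φ x)
    (hψ_ckn : ∀ x ∈ ball 0 ρ \ {0}, 0 ≤ ckn N μ₁ μ₂ ψ x)
    (hu_ckn : ∀ x ∈ ball 0 ρ \ {0}, d * ckn N μ₁ μ₂ φ x ≤ ckn N μ₁ μ₂ u x)
    (hsphere : ∀ x ∈ sphere 0 ρ \ {0}, d * φ x ≤ u x) (hφψ : φ =o[𝓝[≠] 0] ψ)
    {ε : ℝ} (hε : 0 < ε) :
    ∀ x ∈ closedBall 0 ρ \ {0}, d * φ x ≤ u x + ε * ψ x := by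
  rintro x ⟨hxρ, hx₀⟩
  have hx_pos : 0 < ‖x‖ := norm_pos_iff.mpr hx₀
  have hρ : 0 < ρ := hx_pos.trans_le (mem_closedBall_zero_iff.mp hxρ)
  obtain ⟨η, hη, hsmall⟩ := (nhdsWithin_basis_ball.eventually_iff).mp
    ((hφψ.const_mul_left d).bound hε)
  obtain ⟨δ, hδ, hδ_lt⟩ : ∃ δ, 0 < δ ∧ δ < min ‖x‖ η := exists_between (lt_min hx_pos hη)
  set K : Set (E N) := closedBall 0 ρ \ ball 0 δ
  have hK : IsCompact K := (isCompact_closedBall 0 ρ).diff isOpen_ball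
  have hK_subset : K ⊆ closedBall 0 ρ \ {0} :=
    sdiff_subset_sdiff_right (singleton_subset_iff.mpr (mem_ball_self hδ))
  have hK_interior : interior K ⊆ ball 0 ρ \ {0} := fun y hy =>
    ⟨interior_closedBall (0 : E N) hρ.ne' ▸ interior_mono sdiff_subset hy,
      (hK_subset (interior_subset hy)).2⟩
  have hK_frontier : ∀ y ∈ frontier K, d * φ y ≤ (u + ε • ψ) y := by
    intro y hy
    have hyS := hK_subset (hK.isClosed.frontier_subset hy)
    rcases frontier_closedBall_diff_ball_subset 0 δ ρ hy with hyρ | hyδ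
    · exact (hsphere y ⟨hyρ, hyS.2⟩).trans
        (le_add_of_nonneg_right (mul_nonneg hε.le (hψ_nonneg y hyS)))
    · have hyη : y ∈ ball 0 η := by
        rw [mem_ball_zero_iff, mem_sphere_zero_iff_norm.mp hyδ]
        exact hδ_lt.trans_le (min_le_right _ _)
      calc d * φ y ≤ ‖d * φ y‖ := Real.le_norm_self _
        _ ≤ ε * ‖ψ y‖ := hsmall ⟨hyη, hyS.2⟩
        _ = ε * ψ y := by rw [Real.norm_of_nonneg (hψ_nonneg y hyS)]
        _ ≤ u y + ε * ψ y := le_add_of_nonneg_left (hu_nonneg y hyS)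
  have hK_ckn : ∀ y ∈ interior K, d * ckn N μ₁ μ₂ φ y ≤ ckn N μ₁ μ₂ (u + ε • ψ) y := by
    intro y hy
    have hK_nhds : closedBall 0 ρ \ {0} ∈ 𝓝 y :=
      mem_of_superset (mem_interior_iff_mem_nhds.mp hy) hK_subset
    rw [ckn_add_smul (hu.contDiffAt hK_nhds) (hψ.contDiffAt hK_nhds)]
    exact (hu_ckn y (hK_interior hy)).trans
      (le_add_of_nonneg_right (mul_nonneg hε.le (hψ_ckn y (hK_interior hy))))
  have hxK : x ∈ K := by
    refine ⟨hxρ, fun hxδ => ?_⟩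
    exact (mem_ball_zero_iff.mp hxδ).not_ge (hδ_lt.trans_le (min_le_left _ _)).le
  exact mul_le_of_mul_ckn_le_ckn hK
    ((hu.add (hψ.const_smul ε)).mono hK_subset) (hφ.mono hK_subset)
    (fun y hy => hφ_pos y (hK_subset hy)) (fun y hy => hφ_ckn y (hK_interior hy))
    hK_ckn hK_frontier x hxK

theorem mul_le_of_mul_ckn_le_ckn_of_isLittleO
    (hu : ContDiffOn ℝ 2 u (closedBall 0 ρ \ {0})) (hφ : ContDiffOn ℝ 2 φ (closedBall 0 ρ \ {0}))
    (hψ : ContDiffOn ℝ 2 ψ (closedBall 0 ρ \ {0}))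
    (hu_nonneg : ∀ x ∈ closedBall 0 ρ \ {0}, 0 ≤ u x)
    (hφ_pos : ∀ x ∈ closedBall 0 ρ \ {0}, 0 < φ x)
    (hψ_nonneg : ∀ x ∈ closedBall 0 ρ \ {0}, 0 ≤ ψ x)
    (hφ_ckn : ∀ x ∈ ball 0 ρ \ {0}, 0 < ckn N μ₁ μ₂ φ x)
    (hψ_ckn : ∀ x ∈ ball 0 ρ \ {0}, 0 ≤ ckn N μ₁ μ₂ ψ x)
    (hu_ckn : ∀ x ∈ ball 0 ρ \ {0}, d * ckn N μ₁ μ₂ φ x ≤ ckn N μ₁ μ₂ u x)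
    (hsphere : ∀ x ∈ sphere 0 ρ \ {0}, d * φ x ≤ u x) (hφψ : φ =o[𝓝[≠] 0] ψ) :
    ∀ x ∈ closedBall 0 ρ \ {0}, d * φ x ≤ u x := by
  intro x hx
  have hlim : Tendsto (fun ε => u x + ε * ψ x) (𝓝[>] 0) (𝓝 (u x)) := by
    have hcont : Continuous fun ε : ℝ => u x + ε * ψ x := by fun_prop
    simpa using (hcont.tendsto 0).mono_left nhdsWithin_le_nhds
  refine ge_of_tendsto hlim ?_
  filter_upwards [self_mem_nhdsWithin] with ε hε
  exact mul_le_add_mul_of_mul_ckn_le_ckn_of_isLittleO hu hφ hψ hu_nonneg hφ_pos hψ_nonneg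
    hφ_ckn hψ_ckn hu_ckn hsphere hφψ hε x hx

end Comparison

section LowerBound

theorem norm_rpow_isLittleO_norm_rpow {V : Type*} [NormedAddCommGroup V] {a b : ℝ} (hab : a < b) :
    (fun x : V => ‖x‖ ^ b) =o[𝓝[≠] 0] fun x => ‖x‖ ^ a := by
  have hzero : Tendsto (fun x : V => ‖x‖ ^ (b - a)) (𝓝[≠] 0) (𝓝 0) := by
    have hcont : Continuous fun x : V => ‖x‖ ^ (b - a) :=
      continuous_norm.rpow_const fun _ => Or.inr (sub_pos.mpr hab).le
    simpa [Real.zero_rpow (sub_pos.mpr hab).ne'] using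
      (hcont.tendsto 0).mono_left nhdsWithin_le_nhds
  refine isLittleO_of_tendsto' ?_ (hzero.congr' ?_) <;>
    filter_upwards [self_mem_nhdsWithin] with x hx
  · exact fun h => absurd h (Real.rpow_pos_of_pos (norm_pos_iff.mpr hx) a).ne'
  · exact Real.rpow_sub (norm_pos_iff.mpr hx) b a

theorem mul_rpow_le_rpow_mul_rpow {d t y p τ : ℝ} (θ : ℝ) (hd : 0 ≤ d) (ht : 0 < t) (hp : 0 ≤ p)
    (hy : d * t ^ τ ≤ y) : d ^ p * t ^ (p * τ + θ) ≤ t ^ θ * y ^ p :=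
  calc d ^ p * t ^ (p * τ + θ) = t ^ θ * (d * t ^ τ) ^ p := by
        rw [Real.mul_rpow hd (by positivity), ← Real.rpow_mul ht.le, Real.rpow_add ht, mul_comm τ]
        ring
    _ ≤ t ^ θ * y ^ p := by gcongr

theorem exists_pos_mul_le_of_isCompact {X : Type*} [TopologicalSpace X] {K : Set X}
    (hK : IsCompact K) {f g : X → ℝ} (hf : ContinuousOn f K) (hg : ContinuousOn g K)
    (hf_pos : ∀ x ∈ K, 0 < f x) (hg_pos : ∀ x ∈ K, 0 < g x) : ∃ m > 0, ∀ x ∈ K, m * g x ≤ f x := by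
  obtain ⟨m, hm, hle⟩ := hK.exists_forall_le' (hf.div hg fun x hx => (hg_pos x hx).ne')
    fun x hx => div_pos (hf_pos x hx) (hg_pos x hx)
  exact ⟨m, hm, fun x hx => (le_div_iff₀ (hg_pos x hx)).mp (hle x hx)⟩

variable {N : ℕ} {μ₁ μ₂ r ρ : ℝ} {u : E N → ℝ}

theorem exists_mul_norm_rpow_le_of_mul_norm_rpow_le_ckn {σ A : ℝ}
    (hμ₂ : -((N : ℝ) - 2 - μ₁) ^ 2 / 4 ≤ μ₂)
    (hσ : σ ∈ Ioo (tauMinus N μ₁ μ₂) (tauPlus N μ₁ μ₂)) (hA : 0 < A) (hρ : 0 < ρ)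
    (hu : ContDiffOn ℝ 2 u (closedBall 0 ρ \ {0}))
    (hu_pos : ∀ x ∈ closedBall 0 ρ \ {0}, 0 < u x)
    (hu_ckn : ∀ x ∈ ball 0 ρ \ {0}, A * ‖x‖ ^ (σ - 2) ≤ ckn N μ₁ μ₂ u x) :
    ∃ d > 0, ∀ x ∈ closedBall 0 ρ \ {0}, d * ‖x‖ ^ σ ≤ u x := by
  have hpow_pos (s : ℝ) (x : E N) (hx : x ≠ 0) : 0 < ‖x‖ ^ s :=
    Real.rpow_pos_of_pos (norm_pos_iff.mpr hx) s
  have hpow_smooth (s : ℝ) : ContDiffOn ℝ 2 (fun x : E N => ‖x‖ ^ s) (closedBall 0 ρ \ {0}) :=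
    fun x hx => (contDiffAt_norm_rpow s hx.2).contDiffWithinAt
  set c := (σ - tauMinus N μ₁ μ₂) * (tauPlus N μ₁ μ₂ - σ) with hc
  have hc_pos : 0 < c := mul_pos (sub_pos.mpr hσ.1) (sub_pos.mpr hσ.2)
  have hsphere : sphere (0 : E N) ρ ⊆ closedBall 0 ρ \ {0} := fun x hx =>
    ⟨sphere_subset_closedBall hx, ne_of_mem_sphere hx hρ.ne'⟩
  obtain ⟨m, hm, hm_le⟩ := exists_pos_mul_le_of_isCompact (isCompact_sphere (0 : E N) ρ)
    (hu.continuousOn.mono hsphere) ((hpow_smooth σ).continuousOn.mono hsphere)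
    (fun x hx => hu_pos x (hsphere hx)) (fun x hx => hpow_pos σ x (hsphere hx).2)
  refine ⟨min (A / c) m, lt_min (div_pos hA hc_pos) hm, ?_⟩
  refine mul_le_of_mul_ckn_le_ckn_of_isLittleO (μ₁ := μ₁) (μ₂ := μ₂) hu (hpow_smooth σ)
    (hpow_smooth (tauMinus N μ₁ μ₂)) (fun x hx => (hu_pos x hx).le) (fun x hx => hpow_pos _ x hx.2)
    (fun x hx => (hpow_pos _ x hx.2).le) ?_ ?_ ?_ ?_ (norm_rpow_isLittleO_norm_rpow hσ.1)
  · intro x hx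
    rw [ckn_norm_rpow hμ₂ σ hx.2]
    exact mul_pos hc_pos (hpow_pos _ x hx.2)
  · intro x hx
    simp [ckn_norm_rpow hμ₂ _ hx.2]
  · intro x hx
    calc min (A / c) m * ckn N μ₁ μ₂ (fun y => ‖y‖ ^ σ) x
        ≤ A / c * (c * ‖x‖ ^ (σ - 2)) := by
          rw [ckn_norm_rpow hμ₂ σ hx.2, ← hc]
          have hx_pow := hpow_pos (σ - 2) x hx.2
          gcongr
          exact min_le_left _ _
      _ = A * ‖x‖ ^ (σ - 2) := by rw [← mul_assoc, div_mul_cancel₀ A hc_pos.ne']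
      _ ≤ ckn N μ₁ μ₂ u x := hu_ckn x hx
  · intro x hx
    exact (mul_le_mul_of_nonneg_right (min_le_right _ _) (hpow_pos σ x hx.2).le).trans
      (hm_le x hx.1)

theorem stmt15_general {θ p q₀ d τ : ℝ} (hμ₂ : -((N : ℝ) - 2 - μ₁) ^ 2 / 4 ≤ μ₂)
    (hρ : 0 < ρ) (hρr : ρ < r) (hp : 0 ≤ p) (hq₀ : 0 < q₀)
    (hreg : ContDiffOn ℝ 2 u (ball 0 r \ {0}))
    (hineq : ∀ x ∈ ball 0 r \ {0}, q₀ * ‖x‖ ^ θ * u x ^ p ≤ ckn N μ₁ μ₂ u x) (hd : 0 < d)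
    (hlow : ∀ x ∈ ball 0 r \ {0}, d * ‖x‖ ^ τ ≤ u x)
    (hτ : p * τ + θ + 2 ∈ Ioo (tauMinus N μ₁ μ₂) (tauPlus N μ₁ μ₂)) :
    ∃ d' > 0, ∀ x ∈ closedBall 0 ρ \ {0}, d' * ‖x‖ ^ (p * τ + θ + 2) ≤ u x := by
  have hclosedBall : closedBall (0 : E N) ρ \ {0} ⊆ ball 0 r \ {0} :=
    sdiff_subset_sdiff_left (closedBall_subset_ball hρr)
  have hball : ball (0 : E N) ρ \ {0} ⊆ ball 0 r \ {0} :=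
    sdiff_subset_sdiff_left (ball_subset_ball hρr.le)
  refine exists_mul_norm_rpow_le_of_mul_norm_rpow_le_ckn hμ₂ hτ (A := q₀ * d ^ p) (by positivity) hρ
    (hreg.mono hclosedBall) ?_ ?_
  · intro x hx
    have hx_pos : 0 < ‖x‖ := norm_pos_iff.mpr hx.2
    exact lt_of_lt_of_le (by positivity) (hlow x (hclosedBall hx))
  · intro x hx
    calc q₀ * d ^ p * ‖x‖ ^ (p * τ + θ + 2 - 2) = q₀ * (d ^ p * ‖x‖ ^ (p * τ + θ)) := by
          rw [add_sub_cancel_right, mul_assoc]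
      _ ≤ q₀ * (‖x‖ ^ θ * u x ^ p) := mul_le_mul_of_nonneg_left
          (mul_rpow_le_rpow_mul_rpow θ hd.le (norm_pos_iff.mpr hx.2) hp (hlow x (hball hx))) hq₀.le
      _ ≤ ckn N μ₁ μ₂ u x := by simpa only [mul_assoc] using hineq x (hball hx)

end LowerBound

/-- iteration step improving the lower bound of a positive
supersolution of `ℒ_{μ₁,μ₂} u ≥ q₀|x|^θ u^p` from `d|x|^τ` to `d'|x|^{pτ+θ+2}`. -/
theorem stmt15 (N : ℕ) (hN : 2 ≤ N) (μ₁ μ₂ : ℝ)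
    (hμ₂ : -((N : ℝ) - 2 - μ₁) ^ 2 / 4 ≤ μ₂)
    (r θ p q₀ : ℝ) (hr : 0 < r) (hθ : -2 < θ) (hp : 0 < p) (hq₀ : 0 < q₀)
    (u : E N → ℝ) (hreg : ContDiffOn ℝ 2 u (ball (0 : E N) r \ {0}))
    (hpos : ∀ x ∈ ball (0 : E N) r \ {0}, 0 < u x)
    (hineq : ∀ x ∈ ball (0 : E N) r \ {0},
      q₀ * ‖x‖ ^ θ * u x ^ p ≤ ckn N μ₁ μ₂ u x)
    (hbdry : ∀ x ∈ sphere (0 : E N) r, 0 ≤ u x)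
    (d τ : ℝ) (hd : 0 < d)
    (hlow : ∀ x ∈ ball (0 : E N) r \ {0}, d * ‖x‖ ^ τ ≤ u x)
    (hτ : p * τ + θ + 2 ∈ Set.Ioo (tauMinus N μ₁ μ₂) (tauPlus N μ₁ μ₂)) :
    ∃ d' > (0 : ℝ), ∀ x ∈ ball (0 : E N) (r / 2) \ {0},
      d' * ‖x‖ ^ (p * τ + θ + 2) ≤ u x :=
  (stmt15_general hμ₂ (half_pos hr) (half_lt_self hr) hp.le hq₀ hreg hineq hd hlow hτ).imp
    fun _ h => ⟨h.1, fun x hx => h.2 x ⟨ball_subset_closedBall hx.1, hx.2⟩⟩
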